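/- arXiv:math-ph/0311010 — 2 statements merged into one kernel-verified Lean document; each statement's English description precedes it below -/
import Mathlib

section
/- For D > 0 and r > 0, let Y(x) = e^{−|x|/r}/|x| be the Yukawa potential on ℝ³, and let W_D(x) = Y(D) for |x| < D and W_D(x) = Y(x) for |x| ≥ D. Then the measure μ_D = (4π)⁻¹(−Δ + r⁻²)W_D equals (4π)⁻¹ r⁻² Y(D) 1_{|x|<D} dx − (4π)⁻¹ Y′(D) δ(|x|=D) (surface measure on the sphere of radius D), is nonnegative, and ∫∫ Y(x−y) dμ_D(x) dμ_D(y) = (1/3)(D r⁻² + 3D⁻¹ + 3r⁻¹) e^{−2D/r}. -/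
open MeasureTheory Metric Real

noncomputable section

/-- The Yukawa potential `Y_{1/r}(x) = e^{-|x|/r}/|x|` on `ℝ³`. -/
def yukawa (r : ℝ) (x : EuclideanSpace ℝ (Fin 3)) : ℝ := Real.exp (-‖x‖ / r) / ‖x‖

/-- The truncated potential `W_D`: constant `Y(D)` inside the ball of radius `D`,
and equal to the Yukawa potential outside. -/
def yukawaW (r D : ℝ) (x : EuclideanSpace ℝ (Fin 3)) : ℝ :=
  if ‖x‖ < D then Real.exp (-D / r) / D else yukawa r x

/-- The surface measure on the sphere of radius `D` centered at the origin in `ℝ³`. -/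
def sphereSurfaceMeasure (D : ℝ) : Measure (EuclideanSpace ℝ (Fin 3)) :=
  (ENNReal.ofReal (D ^ 2)) •
    Measure.map (fun p : Metric.sphere (0 : EuclideanSpace ℝ (Fin 3)) 1 =>
        D • (p : EuclideanSpace ℝ (Fin 3)))
      ((volume : Measure (EuclideanSpace ℝ (Fin 3))).toSphere)

/-- The smearing measure
`μ_D = (4π)⁻¹ r⁻² Y(D) 1_{|x|<D} dx − (4π)⁻¹ Y′(D) (surface measure on sphere of radius D)`,
where `Y′` is the radial derivative of the Yukawa potential. -/
def yukawaSmear (r D : ℝ) : Measure (EuclideanSpace ℝ (Fin 3)) :=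
  (ENNReal.ofReal ((4 * π)⁻¹ * r⁻¹ ^ 2 * (Real.exp (-D / r) / D))) •
      (volume.restrict (Metric.ball (0 : EuclideanSpace ℝ (Fin 3)) D))
    + (ENNReal.ofReal (-(4 * π)⁻¹ * deriv (fun s : ℝ => Real.exp (-s / r) / s) D)) •
      sphereSurfaceMeasure D

/-- The Laplacian of a function on `ℝ³`. -/
def lap (f : EuclideanSpace ℝ (Fin 3) → ℝ) (x : EuclideanSpace ℝ (Fin 3)) : ℝ :=
  ∑ i, fderiv ℝ (fun y => fderiv ℝ f y (EuclideanSpace.single i 1)) x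
    (EuclideanSpace.single i 1)

/-! Green's identity for `-Δ + r⁻²` is obtained here without a divergence theorem. Along a ray
`y = c + s ω` the density of the bilinear form `∫ ⟪∇Y, ∇u⟫ + r⁻² Y u`, with `Y` centred at `c`,
satisfies `s² · density = -(φ u)′`, where `φ(s) = -s² Y′(s)`. Integrating from `a` to `∞` and over
`ω` leaves `φ(a) ∫ u(c + a ω) dω`. Centred at `0` with `a = D`, this identifies `(-Δ + r⁻²) W_D`
with `4π μ_D`; centred at `x` with `a = 0`, where `φ(0) = 1`, it gives `4π u(x)`. Testing the first
identity on `Y(· - x)` and the second on `W_D` shows that the potential of `μ_D` is `W_D`. As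
`W_D = Y(D)` on the support of `μ_D`, the self-energy is `Y(D) μ_D(ℝ³)`. -/

section RadialCalculus

open Filter Set
open scoped Topology Gradient

variable {E F : Type*} [NormedAddCommGroup E] [InnerProductSpace ℝ E]
  [NormedAddCommGroup F] [NormedSpace ℝ F]

theorem integral_Ioi_of_hasDerivAt_off_countable_of_tendsto [CompleteSpace F]
    {g g' : ℝ → F} {a : ℝ} {l : F} {s : Set ℝ} (hs : s.Countable)
    (hcont : ContinuousOn g (Ici a)) (hderiv : ∀ t ∈ Ioi a \ s, HasDerivAt g (g' t) t)
    (hint : IntegrableOn g' (Ioi a)) (hlim : Tendsto g atTop (𝓝 l)) :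
    ∫ t in Ioi a, g' t = l - g a := by
  refine tendsto_nhds_unique (intervalIntegral_tendsto_integral_Ioi a hint tendsto_id)
    ((hlim.sub_const _).congr' ?_)
  filter_upwards [Ioi_mem_atTop a] with b (hb : a < b)
  refine (integral_eq_of_hasDerivAt_off_countable_of_le g g' hb.le hs
    (hcont.mono Icc_subset_Ici_self) (fun t ht => hderiv t ⟨ht.1.1, ht.2⟩) ?_).symm
  exact (intervalIntegrable_iff_integrableOn_Ioc_of_le hb.le).2
    (hint.mono_set Ioc_subset_Ioi_self)

theorem norm_smul_of_mem_unitSphere (ω : sphere (0 : F) 1) {s : ℝ} (hs : 0 ≤ s) :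
    ‖s • (ω : F)‖ = s := by
  rw [norm_smul_of_nonneg hs, norm_eq_of_mem_sphere ω, mul_one]

theorem hasDerivAt_const_add_smul (c ω : F) (s : ℝ) :
    HasDerivAt (fun t : ℝ => c + t • ω) ω s := by
  simpa using ((hasDerivAt_id s).smul_const ω).const_add c

theorem hasGradientAt_comp_norm [CompleteSpace E] {φ : ℝ → ℝ} {φ' : ℝ} {x : E} (hx : x ≠ 0)
    (hφ : HasDerivAt φ φ' ‖x‖) : HasGradientAt (fun y => φ ‖y‖) ((φ' / ‖x‖) • x) x := by
  have hnorm : HasFDerivAt (fun y : E => ‖y‖) (‖x‖⁻¹ • innerSL ℝ x) x := by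
    have h := (hasStrictFDerivAt_norm_sq x).hasFDerivAt.sqrt (by positivity)
    simp only [sqrt_sq (norm_nonneg _)] at h
    refine h.congr_fderiv ?_
    ext v
    simp only [smul_apply, nsmul_eq_mul, smul_eq_mul]
    field_simp
    norm_num
  rw [hasGradientAt_iff_hasFDerivAt]
  refine (hφ.comp_hasFDerivAt x hnorm).congr_fderiv ?_
  ext v
  simp [div_eq_mul_inv, mul_assoc]

theorem finite_setOf_norm_add_smul_eq (x : E) {ω : E} (hω : ω ≠ 0) (D : ℝ) :
    {s : ℝ | ‖x + s • ω‖ = D}.Finite := by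
  set b := inner ℝ x ω
  set K := ‖ω‖ ^ 2 * (D ^ 2 - ‖x‖ ^ 2) + b ^ 2
  have hinj : Function.Injective fun s : ℝ => s * ‖ω‖ ^ 2 + b := fun s t h =>
    mul_right_cancel₀ (pow_ne_zero 2 (norm_ne_zero_iff.2 hω)) (add_right_cancel h)
  refine ((toFinite {√K, -√K}).preimage hinj.injOn).subset fun s (hs : ‖x + s • ω‖ = D) => ?_
  have hsq : (s * ‖ω‖ ^ 2 + b) ^ 2 = K := by
    have hexpand := norm_add_sq_real x (s • ω)
    rw [hs, inner_smul_right, norm_smul, mul_pow, norm_eq_abs, sq_abs] at hexpand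
    linear_combination -‖ω‖ ^ 2 * hexpand
  exact eq_or_eq_neg_of_abs_eq (by rw [← sqrt_sq_eq_abs, hsq])

theorem setOf_add_smul_eq_subsingleton (x y : F) {ω : F} (hω : ω ≠ 0) :
    {s : ℝ | x + s • ω = y}.Subsingleton := fun _ hs _ ht =>
  smul_left_injective ℝ hω (add_left_cancel (hs.trans ht.symm))

end RadialCalculus

section PolarCoordinates

open Set Measure
open scoped Pointwise

/-- The measure `s ^ n ds` on the half-line `(a, ∞)`, viewed as a measure on `ℝ`: the radial factor
of Lebesgue measure outside a ball of radius `a` in dimension `n + 1`. -/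
def radialMeasure (n : ℕ) (a : ℝ) : Measure ℝ :=
  (volume.restrict (Ioi a)).withDensity fun s => ENNReal.ofReal (s ^ n)

instance sFinite_radialMeasure (n : ℕ) (a : ℝ) : SFinite (radialMeasure n a) := by
  unfold radialMeasure; infer_instance

theorem measurePreserving_coe_volumeIoiPow (n : ℕ) :
    MeasurePreserving ((↑) : Ioi (0 : ℝ) → ℝ) (volumeIoiPow n) (radialMeasure n 0) := by
  refine ⟨measurable_subtype_coe, Measure.ext fun t ht => ?_⟩
  rw [map_apply measurable_subtype_coe ht, volumeIoiPow, radialMeasure,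
    withDensity_apply _ (measurable_subtype_coe ht), withDensity_apply _ ht,
    ← map_comap_subtype_coe measurableSet_Ioi,
    setLIntegral_map ht (by fun_prop) measurable_subtype_coe]

theorem radialMeasure_restrict_lt_abs (n : ℕ) {a : ℝ} (ha : 0 ≤ a) :
    (radialMeasure n 0).restrict {s | a < |s|} = radialMeasure n a := by
  have hmeas : MeasurableSet {s : ℝ | a < |s|} :=
    (isOpen_lt continuous_const continuous_abs).measurableSet
  have hinter : {s : ℝ | a < |s|} ∩ Ioi 0 = Ioi a := by
    ext s
    simp only [mem_inter_iff, mem_ofPred_eq, mem_Ioi]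
    grind
  rw [radialMeasure, restrict_withDensity hmeas, restrict_restrict hmeas, hinter, radialMeasure]

section RadialIntegral

variable {F : Type*} [NormedAddCommGroup F] [NormedSpace ℝ F]

theorem integrable_radialMeasure_iff (n : ℕ) {a : ℝ} (ha : 0 ≤ a) {g : ℝ → F} :
    Integrable g (radialMeasure n a) ↔ IntegrableOn (fun s => s ^ n • g s) (Ioi a) := by
  rw [radialMeasure, integrable_withDensity_iff_integrable_smul' (by fun_prop) (by simp)]
  refine integrableOn_congr_fun (fun s hs => ?_) measurableSet_Ioi
  rw [ENNReal.toReal_ofReal (pow_nonneg (ha.trans hs.out.le) n)]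

theorem integral_radialMeasure (n : ℕ) {a : ℝ} (ha : 0 ≤ a) (g : ℝ → F) :
    ∫ s, g s ∂radialMeasure n a = ∫ s in Ioi a, s ^ n • g s := by
  rw [radialMeasure, integral_withDensity_eq_integral_toReal_smul (by fun_prop) (by simp)]
  refine setIntegral_congr_fun measurableSet_Ioi fun s hs => ?_
  rw [ENNReal.toReal_ofReal (pow_nonneg (ha.trans hs.out.le) n)]

end RadialIntegral

variable {E : Type*} [NormedAddCommGroup E] [NormedSpace ℝ E] [FiniteDimensional ℝ E]
  [MeasurableSpace E] [BorelSpace E] (μ : Measure E) [μ.IsAddHaarMeasure]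

local notation "dim" => Module.finrank ℝ

theorem toSphere_singleton (hE : 1 < dim E) (ω : sphere (0 : E) 1) : μ.toSphere {ω} = 0 := by
  have hline : μ (ℝ ∙ (ω : E) : Submodule ℝ E) = 0 := by
    refine addHaar_submodule μ _ fun htop => hE.ne' ?_
    rw [← finrank_top ℝ E, ← htop, finrank_span_singleton (ne_zero_of_mem_unit_sphere ω)]
  have hcone : Ioo (0 : ℝ) 1 • ((↑) '' {ω} : Set E) ⊆ (ℝ ∙ (ω : E) : Submodule ℝ E) := by
    rw [image_singleton]
    rintro _ ⟨t, -, _, rfl, rfl⟩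
    exact Submodule.smul_mem _ _ (Submodule.mem_span_singleton_self _)
  rw [toSphere_apply' μ (measurableSet_singleton _), measure_mono_null hcone hline, mul_zero]

theorem ae_toSphere_smul_ne (hE : 1 < dim E) (x : E) :
    ∀ᵐ ω : sphere (0 : E) 1 ∂μ.toSphere, ∀ s : ℝ, 0 < s → s • (ω : E) ≠ x := by
  have : NullSingletonClass μ.toSphere := ⟨toSphere_singleton μ hE⟩
  have hsub : {ω : sphere (0 : E) 1 | ∃ s : ℝ, 0 < s ∧ s • (ω : E) = x}.Subsingleton := by
    rintro ω ⟨s, hs, hx⟩ ω' ⟨s', hs', hx'⟩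
    have hss' : s = s' := by
      rw [← norm_smul_of_mem_unitSphere ω hs.le, hx, ← hx', norm_smul_of_mem_unitSphere ω' hs'.le]
    subst hss'
    exact Subtype.ext (smul_right_injective E hs.ne' (hx.trans hx'.symm))
  filter_upwards [compl_mem_ae_iff.2 (hsub.measure_zero μ.toSphere)] with ω hω s hs hx
  exact hω ⟨s, hs, hx⟩

theorem measurePreserving_polar [Nontrivial E] :
    MeasurePreserving (fun p : sphere (0 : E) 1 × ℝ => p.2 • (p.1 : E))
      (μ.toSphere.prod (radialMeasure (dim E - 1) 0)) μ := by
  have hsubtype : MeasurePreserving ((↑) : ({0}ᶜ : Set E) → E) (μ.comap (↑)) μ := by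
    refine ⟨measurable_subtype_coe, ?_⟩
    rw [map_comap_subtype_coe (measurableSet_singleton _).compl, restrict_compl_singleton]
  have hpolar : MeasurePreserving ((fun p : sphere (0 : E) 1 × ℝ => p.2 • (p.1 : E)) ∘
      Prod.map id (↑)) (μ.toSphere.prod (volumeIoiPow (dim E - 1))) μ :=
    hsubtype.comp (MeasurePreserving.symm (homeomorphUnitSphereProd E).toMeasurableEquiv
      μ.measurePreserving_homeomorphUnitSphereProd)
  have hmap := (MeasurePreserving.id μ.toSphere).prod
    (measurePreserving_coe_volumeIoiPow (dim E - 1))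
  rw [← hmap.map_eq]
  exact hpolar.map_of_comp (by fun_prop) hmap.measurable

theorem measurePreserving_polar_compl_closedBall [Nontrivial E] (c : E) {a : ℝ} (ha : 0 ≤ a) :
    MeasurePreserving (fun p : sphere (0 : E) 1 × ℝ => c + p.2 • (p.1 : E))
      (μ.toSphere.prod (radialMeasure (dim E - 1) a)) (μ.restrict (closedBall c a)ᶜ) := by
  have hpolar := ((measurePreserving_add_left μ c).comp (measurePreserving_polar μ)
    ).restrict_preimage (measurableSet_closedBall (x := c) (ε := a)).compl
  have hpre : (fun p : sphere (0 : E) 1 × ℝ => c + p.2 • (p.1 : E)) ⁻¹' (closedBall c a)ᶜ =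
      univ ×ˢ {s | a < |s|} := by
    ext p
    simp [norm_smul]
  rwa [Function.comp_def, hpre, ← prod_restrict, restrict_univ,
    radialMeasure_restrict_lt_abs _ ha] at hpolar

variable {μ} {F : Type*} [NormedAddCommGroup F] [NormedSpace ℝ F] {f : E → F} {c : E} {a : ℝ}

theorem ae_integrableOn_ray [Nontrivial E] (ha : 0 ≤ a) (hf : IntegrableOn f (closedBall c a)ᶜ μ) :
    ∀ᵐ ω : sphere (0 : E) 1 ∂μ.toSphere,
      IntegrableOn (fun s => s ^ (dim E - 1) • f (c + s • (ω : E))) (Ioi a) := by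
  filter_upwards [((measurePreserving_polar_compl_closedBall μ c ha).integrable_comp_of_integrable
    hf).prod_right_ae] with ω hω
  exact (integrable_radialMeasure_iff _ ha).1 hω

theorem integrable_integral_ray [Nontrivial E] (ha : 0 ≤ a)
    (hf : IntegrableOn f (closedBall c a)ᶜ μ) :
    Integrable (fun ω : sphere (0 : E) 1 => ∫ s in Ioi a, s ^ (dim E - 1) • f (c + s • (ω : E)))
      μ.toSphere := by
  simpa only [Function.comp_def, integral_radialMeasure _ ha] using
    ((measurePreserving_polar_compl_closedBall μ c ha).integrable_comp_of_integrable
      hf).integral_prod_left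

theorem setIntegral_compl_closedBall_eq_integral_ray [Nontrivial E] (ha : 0 ≤ a)
    (hf : IntegrableOn f (closedBall c a)ᶜ μ) :
    ∫ x in (closedBall c a)ᶜ, f x ∂μ =
      ∫ ω : sphere (0 : E) 1, (∫ s in Ioi a, s ^ (dim E - 1) • f (c + s • (ω : E)))
        ∂μ.toSphere := by
  have hpolar := measurePreserving_polar_compl_closedBall μ c ha
  rw [← hpolar.map_eq, integral_map hpolar.aemeasurable (hpolar.map_eq ▸ hf.aestronglyMeasurable),
    integral_prod (fun p : sphere (0 : E) 1 × ℝ => f (c + p.2 • (p.1 : E)))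
      (hpolar.integrable_comp_of_integrable hf)]
  simp only [integral_radialMeasure _ ha]

end PolarCoordinates

section WeakLaplacian

open scoped Gradient

section NormedSpace

variable {E : Type*} [NormedAddCommGroup E] [NormedSpace ℝ E] {f g u : E → ℝ} {K : NNReal}

theorem contDiff_fderiv_apply_const {n : ℕ} (hf : ContDiff ℝ (n + 1) f) (v : E) :
    ContDiff ℝ n fun y => fderiv ℝ f y v :=
  (hf.fderiv_right le_rfl).clm_apply contDiff_const

variable [MeasurableSpace E] [BorelSpace E] {μ : Measure E}

theorem integrable_lineDeriv_mul [IsFiniteMeasureOnCompacts μ] (hu : LipschitzWith K u) (v : E)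
    (hg : Continuous g) (hsupp : HasCompactSupport g) :
    Integrable (fun x => lineDeriv ℝ u x v * g x) μ :=
  (hg.integrable_of_hasCompactSupport hsupp).bdd_mul
    (measurable_lineDeriv hu.continuous).aestronglyMeasurable
    (.of_forall fun _ => norm_lineDeriv_le_of_lipschitz ℝ hu)

theorem integrable_mul_fderiv_fderiv_apply [IsFiniteMeasureOnCompacts μ] (hu : Continuous u)
    (hf : ContDiff ℝ 2 f) (hsupp : HasCompactSupport f) (v w : E) :
    Integrable (fun x => u x * fderiv ℝ (fun y => fderiv ℝ f y v) x w) μ :=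
  (hu.mul (contDiff_fderiv_apply_const (n := 0) (contDiff_fderiv_apply_const (n := 1) hf v)
    w).continuous).integrable_of_hasCompactSupport
    ((hsupp.fderiv_apply ℝ v).fderiv_apply ℝ w).mul_left

theorem integral_lineDeriv_mul_eq_neg [FiniteDimensional ℝ E] [μ.IsAddHaarMeasure]
    (hu : LipschitzWith K u) (hg : ContDiff ℝ 1 g) (hsupp : HasCompactSupport g) (v : E) :
    ∫ x, lineDeriv ℝ u x v * g x ∂μ = -∫ x, u x * fderiv ℝ g x v ∂μ := by
  obtain ⟨L, hL⟩ := hg.lipschitzWith_of_hasCompactSupport hsupp one_ne_zero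
  rw [hu.integral_lineDeriv_mul_eq hL hsupp, ← integral_neg]
  refine integral_congr_ae (.of_forall fun x => ?_)
  simp only
  rw [((hg.differentiable one_ne_zero) x).lineDeriv_eq_fderiv, map_neg]
  ring

end NormedSpace

theorem integral_inner_gradient_eq_neg {ι E : Type*} [Fintype ι] [NormedAddCommGroup E]
    [InnerProductSpace ℝ E] [FiniteDimensional ℝ E] [MeasurableSpace E] [BorelSpace E]
    {μ : Measure E} [μ.IsAddHaarMeasure] (b : OrthonormalBasis ι ℝ E) {f u : E → ℝ} {K : NNReal}
    (hu : LipschitzWith K u) (hf : ContDiff ℝ 2 f) (hsupp : HasCompactSupport f) :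
    ∫ x, inner ℝ (∇ u x) (∇ f x) ∂μ =
      -∫ x, u x * ∑ i, fderiv ℝ (fun y => fderiv ℝ f y (b i)) x (b i) ∂μ := by
  have hpartial (i) : ContDiff ℝ 1 fun y => fderiv ℝ f y (b i) :=
    contDiff_fderiv_apply_const hf (b i)
  have hpartial_supp (i) : HasCompactSupport fun y => fderiv ℝ f y (b i) :=
    hsupp.fderiv_apply ℝ (b i)
  have hexpand : ∀ᵐ x ∂μ, inner ℝ (∇ u x) (∇ f x) =
      ∑ i, lineDeriv ℝ u x (b i) * fderiv ℝ f x (b i) := by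
    filter_upwards [hu.ae_differentiableAt] with x hx
    rw [← b.sum_inner_mul_inner]
    refine Finset.sum_congr rfl fun i _ => ?_
    rw [inner_gradient_left, hx.lineDeriv_eq_fderiv, real_inner_comm, inner_gradient_left]
  rw [integral_congr_ae hexpand, integral_finsetSum _ fun i _ =>
    integrable_lineDeriv_mul hu (b i) (hpartial i).continuous (hpartial_supp i)]
  simp only [Finset.mul_sum]
  rw [integral_finsetSum _ fun i _ =>
    integrable_mul_fderiv_fderiv_apply hu.continuous hf hsupp (b i) (b i), ← Finset.sum_neg_distrib]
  exact Finset.sum_congr rfl fun i _ =>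
    integral_lineDeriv_mul_eq_neg hu (hpartial i) (hpartial_supp i) (b i)

end WeakLaplacian

section ScreenedDensity

open scoped Gradient

variable {E : Type*} [NormedAddCommGroup E] [InnerProductSpace ℝ E] [CompleteSpace E]

/-- The integrand of the bilinear form `∫ ⟪∇u, ∇v⟫ + r⁻² u v` of the operator `-Δ + r⁻²`. -/
def screenedDensity (r : ℝ) (u v : E → ℝ) (y : E) : ℝ :=
  inner ℝ (∇ u y) (∇ v y) + r⁻¹ ^ 2 * (u y * v y)

theorem screenedDensity_comm (r : ℝ) (u v : E → ℝ) :
    screenedDensity r u v = screenedDensity r v u := by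
  ext y
  rw [screenedDensity, screenedDensity, real_inner_comm, mul_comm (u y)]

theorem norm_gradient (u : E → ℝ) (y : E) : ‖∇ u y‖ = ‖fderiv ℝ u y‖ := by
  rw [← toDual_gradient, LinearIsometryEquiv.norm_map]

variable [MeasurableSpace E] [BorelSpace E]

theorem measurable_gradient (u : E → ℝ) : Measurable (∇ u) :=
  (InnerProductSpace.toDual ℝ E).symm.continuous.measurable.comp (measurable_fderiv ℝ u)

variable [FiniteDimensional ℝ E] {μ : Measure E} {u v : E → ℝ} {K : NNReal}

theorem integrable_inner_gradient (hu : Integrable (∇ u) μ) (hv : LipschitzWith K v) :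
    Integrable (fun y => inner ℝ (∇ u y) (∇ v y)) μ := by
  refine (hu.norm.mul_const (K : ℝ)).mono'
    (hu.aestronglyMeasurable.inner (measurable_gradient v).aestronglyMeasurable)
    (.of_forall fun y => (norm_inner_le_norm _ _).trans ?_)
  rw [norm_gradient v]
  gcongr
  exact norm_fderiv_le_of_lipschitz ℝ hv

theorem integrable_screenedDensity (r : ℝ) {B : ℝ} (hu : Integrable u μ)
    (hu' : Integrable (∇ u) μ) (hv : LipschitzWith K v) (hB : ∀ y, |v y| ≤ B) :
    Integrable (screenedDensity r u v) μ :=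
  (integrable_inner_gradient hu' hv).add
    ((hu.mul_bdd hv.continuous.aestronglyMeasurable (.of_forall hB)).const_mul _)

theorem integrable_gradient_of_contDiff [IsFiniteMeasureOnCompacts μ] (hu : ContDiff ℝ 1 u)
    (hsupp : HasCompactSupport u) : Integrable (∇ u) μ :=
  ((hu.continuous_fderiv one_ne_zero).integrable_of_hasCompactSupport
    (hsupp.fderiv (𝕜 := ℝ))).mono (measurable_gradient u).aestronglyMeasurable
    (.of_forall fun y => (norm_gradient u y).le)

end ScreenedDensity

section Yukawa

open Filter Set Asymptotics Bornology
open scoped Topology Gradient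

local notation "ℝ³" => EuclideanSpace ℝ (Fin 3)

/-- The radial profile `Y(s) = e^{-s/r}/s` of the Yukawa potential. -/
def yukawaProfile (r s : ℝ) : ℝ := exp (-s / r) / s

/-- The flux `-s²Y′(s)` of the Yukawa field through a sphere of radius `s`, per unit solid angle,
extended to `s = 0` by its limit `1`. -/
def yukawaFlux (r s : ℝ) : ℝ := (1 + s / r) * exp (-s / r)

variable {r D s : ℝ}

theorem hasDerivAt_exp_neg_div (r s : ℝ) :
    HasDerivAt (fun t => exp (-t / r)) (exp (-s / r) * (-1 / r)) s :=
  ((hasDerivAt_neg s).div_const r).exp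

theorem hasDerivAt_yukawaProfile (r : ℝ) (hs : s ≠ 0) :
    HasDerivAt (yukawaProfile r) (-(yukawaFlux r s / s ^ 2)) s := by
  refine ((hasDerivAt_exp_neg_div r s).div (hasDerivAt_id s) hs).congr_deriv ?_
  rw [yukawaFlux, id]
  ring

theorem hasDerivAt_yukawaFlux (r s : ℝ) :
    HasDerivAt (yukawaFlux r) (-(s ^ 2 * (r⁻¹ ^ 2 * yukawaProfile r s))) s := by
  refine ((((hasDerivAt_id s).div_const r).const_add 1).mul
    (hasDerivAt_exp_neg_div r s)).congr_deriv ?_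
  rw [yukawaProfile, id]
  rcases eq_or_ne s 0 with rfl | _
  · simp only [zero_div, neg_zero, exp_zero]
    ring
  · field_simp
    ring

theorem continuous_yukawaFlux (r : ℝ) : Continuous (yukawaFlux r) := by
  unfold yukawaFlux
  fun_prop

theorem yukawaFlux_zero (r : ℝ) : yukawaFlux r 0 = 1 := by simp [yukawaFlux]

theorem yukawaFlux_pos (hr : 0 < r) (hs : 0 ≤ s) : 0 < yukawaFlux r s :=
  mul_pos (add_pos_of_pos_of_nonneg one_pos (div_nonneg hs hr.le)) (exp_pos _)

theorem yukawaFlux_le_one (r s : ℝ) : yukawaFlux r s ≤ 1 := by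
  rw [yukawaFlux, neg_div, exp_neg, ← div_eq_mul_inv, div_le_one (exp_pos _), add_comm]
  exact add_one_le_exp _

theorem tendsto_yukawaFlux_atTop (hr : 0 < r) : Tendsto (yukawaFlux r) atTop (𝓝 0) := by
  have hdiv : Tendsto (fun s : ℝ => s / r) atTop atTop := tendsto_id.atTop_div_const hr
  have hlim := ((tendsto_pow_mul_exp_neg_atTop_nhds_zero 0).add
    (tendsto_pow_mul_exp_neg_atTop_nhds_zero 1)).comp hdiv
  rw [add_zero] at hlim
  refine hlim.congr fun s => ?_
  simp only [Function.comp, pow_zero, pow_one, yukawaFlux, neg_div, add_mul]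

theorem yukawaProfile_nonneg (r : ℝ) (hs : 0 ≤ s) : 0 ≤ yukawaProfile r s :=
  div_nonneg (exp_pos _).le hs

theorem yukawaProfile_le_inv (hr : 0 < r) (hs : 0 ≤ s) : yukawaProfile r s ≤ s⁻¹ := by
  rw [yukawaProfile, ← one_div]
  gcongr
  exact exp_le_one_iff.2 (div_nonpos_of_nonpos_of_nonneg (neg_nonpos.2 hs) hr.le)

theorem yukawa_eq_yukawaProfile_norm (r : ℝ) (x : ℝ³) : yukawa r x = yukawaProfile r ‖x‖ := rfl

theorem abs_yukawa_le_inv (hr : 0 < r) (x : ℝ³) : |yukawa r x| ≤ ‖x‖⁻¹ := by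
  rw [yukawa_eq_yukawaProfile_norm, abs_of_nonneg (yukawaProfile_nonneg r (norm_nonneg x))]
  exact yukawaProfile_le_inv hr (norm_nonneg x)

theorem hasGradientAt_yukawa_sub (r : ℝ) {c y : ℝ³} (hy : y ≠ c) :
    HasGradientAt (fun z => yukawa r (z - c)) (-(yukawaFlux r ‖y - c‖ / ‖y - c‖ ^ 3) • (y - c))
      y := by
  have hyc : y - c ≠ 0 := sub_ne_zero.2 hy
  have h := hasGradientAt_comp_norm hyc (hasDerivAt_yukawaProfile r (norm_ne_zero_iff.2 hyc))
  rw [neg_div, div_div, ← pow_succ] at h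
  exact (hasFDerivAt_comp_sub c).2 h

theorem norm_gradient_yukawa_sub (r : ℝ) {c y : ℝ³} (hy : y ≠ c) :
    ‖∇ (fun z => yukawa r (z - c)) y‖ = |yukawaFlux r ‖y - c‖ / ‖y - c‖ ^ 2| := by
  have hyc : ‖y - c‖ ≠ 0 := norm_ne_zero_iff.2 (sub_ne_zero.2 hy)
  rw [(hasGradientAt_yukawa_sub r hy).gradient, norm_smul, norm_neg, norm_eq_abs, abs_div, abs_div,
    abs_pow, abs_pow, abs_norm]
  field_simp

theorem integrable_radial_iff {φ : ℝ → ℝ} :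
    Integrable (fun x : ℝ³ => φ ‖x‖) ↔ IntegrableOn (fun s => s ^ 2 * φ s) (Ioi 0) := by
  simpa using integrable_fun_norm_addHaar (volume : Measure ℝ³) (f := φ)

theorem integrableOn_deriv_yukawaFlux (hr : 0 < r) :
    IntegrableOn (fun s => s ^ 2 * (r⁻¹ ^ 2 * yukawaProfile r s)) (Ioi 0) := by
  refine (integrableOn_Ioi_deriv_of_nonpos' (fun s _ => hasDerivAt_yukawaFlux r s)
    (fun s hs => ?_) (tendsto_yukawaFlux_atTop hr)).neg.congr (.of_forall fun s => neg_neg _)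
  have := yukawaProfile_nonneg r (mem_Ioi.1 hs).le
  exact neg_nonpos.2 (by positivity)

theorem integrable_yukawa_sub (hr : 0 < r) (c : ℝ³) : Integrable fun y => yukawa r (y - c) := by
  have hradial : Integrable fun x : ℝ³ => yukawaProfile r ‖x‖ := by
    refine integrable_radial_iff.2 (((integrableOn_deriv_yukawaFlux hr).const_mul (r ^ 2)).congr
      (.of_forall fun s => ?_))
    field_simp
  exact hradial.comp_sub_right c

theorem integrableOn_yukawaFlux (hr : 0 < r) : IntegrableOn (yukawaFlux r) (Ioi 0) := by
  have hexp : IntegrableOn (fun s : ℝ => exp (-(1 / r) * s)) (Ioi 0) :=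
    integrableOn_exp_mul_Ioi (neg_neg_of_pos (by positivity)) 0
  refine (hexp.add ((integrableOn_deriv_yukawaFlux hr).const_mul r)).congr_fun
    (fun s hs => ?_) measurableSet_Ioi
  have : s ≠ 0 := (mem_Ioi.1 hs).ne'
  have hneg : -(1 / r) * s = -s / r := by ring
  simp only [Pi.add_apply, hneg, yukawaFlux, yukawaProfile]
  field_simp

theorem integrable_gradient_yukawa_sub (hr : 0 < r) (c : ℝ³) :
    Integrable (∇ fun y => yukawa r (y - c)) := by
  have hradial : Integrable fun y : ℝ³ => yukawaFlux r ‖y‖ / ‖y‖ ^ 2 :=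
    integrable_radial_iff.2 <| (integrableOn_yukawaFlux hr).congr_fun
      (fun s hs => (mul_div_cancel₀ _ (pow_ne_zero 2 (mem_Ioi.1 hs).ne')).symm) measurableSet_Ioi
  refine (hradial.comp_sub_right c).mono (measurable_gradient _).aestronglyMeasurable ?_
  filter_upwards [compl_mem_ae_iff.2 (measure_singleton c)] with y hy
  exact (norm_gradient_yukawa_sub r hy).le

/-- Regularity of `u` along the rays from `c`, outside the ball of radius `a`, under which the
fundamental theorem of calculus yields Green's formula there: `u` is continuous along almost every
ray, differentiable off countably many points of each ray, and bounded at infinity. -/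
structure IsRayRegular (u : ℝ³ → ℝ) (c : ℝ³) (a : ℝ) : Prop where
  continuousOn : ∀ᵐ ω : sphere (0 : ℝ³) 1 ∂(volume : Measure ℝ³).toSphere,
    ContinuousOn (fun s : ℝ => u (c + s • (ω : ℝ³))) (Ici a)
  countable : ∀ ω : sphere (0 : ℝ³) 1,
    {s : ℝ | ¬DifferentiableAt ℝ u (c + s • (ω : ℝ³))}.Countable
  isBigO_one : u =O[cobounded ℝ³] fun _ => (1 : ℝ)

variable {u : ℝ³ → ℝ} {c : ℝ³} {a : ℝ}

theorem tendsto_const_add_smul_cobounded (c : ℝ³) (ω : sphere (0 : ℝ³) 1) :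
    Tendsto (fun s : ℝ => c + s • (ω : ℝ³)) atTop (cobounded ℝ³) := by
  rw [← tendsto_norm_atTop_iff_cobounded]
  refine tendsto_atTop_mono' atTop ?_ (tendsto_atTop_add_const_right atTop (-‖c‖) tendsto_id)
  filter_upwards [eventually_ge_atTop 0] with s hs
  have h := norm_sub_le (c + s • (ω : ℝ³)) c
  rw [add_sub_cancel_left, norm_smul_of_mem_unitSphere ω hs] at h
  simpa [← sub_eq_add_neg] using h

theorem hasDerivAt_yukawaFlux_mul_ray (r : ℝ) (ω : sphere (0 : ℝ³) 1) (hs : 0 < s)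
    (hu : DifferentiableAt ℝ u (c + s • (ω : ℝ³))) :
    HasDerivAt (fun t => yukawaFlux r t * u (c + t • (ω : ℝ³)))
      (-(s ^ 2 * screenedDensity r (fun y => yukawa r (y - c)) u (c + s • (ω : ℝ³)))) s := by
  have hnorm : ‖s • (ω : ℝ³)‖ = s := norm_smul_of_mem_unitSphere ω hs.le
  have hne : c + s • (ω : ℝ³) ≠ c := by
    simpa using ⟨hs.ne', ne_zero_of_mem_unit_sphere ω⟩
  refine ((hasDerivAt_yukawaFlux r s).mul
    (hu.hasFDerivAt.comp_hasDerivAt s (hasDerivAt_const_add_smul c (ω : ℝ³) s))).congr_deriv ?_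
  rw [screenedDensity, (hasGradientAt_yukawa_sub r hne).gradient, add_sub_cancel_left, hnorm,
    smul_smul, inner_smul_left, real_inner_comm, inner_gradient_left, yukawa, hnorm]
  simp only [yukawaProfile, conj_trivial, Function.comp_apply]
  field_simp
  ring

theorem IsRayRegular.ae_integral_ray (hu : IsRayRegular u c a) (hr : 0 < r) (ha : 0 ≤ a)
    (hint : IntegrableOn (screenedDensity r (fun y => yukawa r (y - c)) u) (closedBall c a)ᶜ) :
    ∀ᵐ ω : sphere (0 : ℝ³) 1 ∂(volume : Measure ℝ³).toSphere,
      ∫ s in Ioi a, s ^ 2 • screenedDensity r (fun y => yukawa r (y - c)) u (c + s • (ω : ℝ³)) =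
        yukawaFlux r a * u (c + a • (ω : ℝ³)) := by
  have hray := ae_integrableOn_ray ha hint
  filter_upwards [hray, hu.continuousOn] with ω hω hcont
  rw [finrank_euclideanSpace_fin] at hω
  have hlim : Tendsto (fun s => yukawaFlux r s * u (c + s • (ω : ℝ³))) atTop (𝓝 0) :=
    (tendsto_yukawaFlux_atTop hr).zero_mul_isBoundedUnder_le
      ((isBigO_one_iff ℝ).1 (hu.isBigO_one.comp_tendsto (tendsto_const_add_smul_cobounded c ω)))
  have hftc := integral_Ioi_of_hasDerivAt_off_countable_of_tendsto (hu.countable ω)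
    ((continuous_yukawaFlux r).continuousOn.mul hcont)
    (fun s hs => hasDerivAt_yukawaFlux_mul_ray r ω (ha.trans_lt hs.1) (not_not.1 hs.2)) hω.neg hlim
  rw [integral_neg, zero_sub, neg_inj] at hftc
  exact hftc

theorem IsRayRegular.integrable_sphere (hu : IsRayRegular u c a) (hr : 0 < r) (ha : 0 ≤ a)
    (hint : IntegrableOn (screenedDensity r (fun y => yukawa r (y - c)) u) (closedBall c a)ᶜ) :
    Integrable (fun ω : sphere (0 : ℝ³) 1 => u (c + a • (ω : ℝ³)))
      (volume : Measure ℝ³).toSphere := by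
  have hray := integrable_integral_ray ha hint
  rw [finrank_euclideanSpace_fin] at hray
  refine (integrable_const_mul_iff (yukawaFlux_pos hr ha).ne'.isUnit _).1 ?_
  exact hray.congr (hu.ae_integral_ray hr ha hint)

theorem IsRayRegular.setIntegral_screenedDensity_yukawa (hu : IsRayRegular u c a) (hr : 0 < r)
    (ha : 0 ≤ a)
    (hint : IntegrableOn (screenedDensity r (fun y => yukawa r (y - c)) u) (closedBall c a)ᶜ) :
    ∫ y in (closedBall c a)ᶜ, screenedDensity r (fun y => yukawa r (y - c)) u y =
      yukawaFlux r a *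
        ∫ ω : sphere (0 : ℝ³) 1, u (c + a • (ω : ℝ³)) ∂(volume : Measure ℝ³).toSphere := by
  rw [setIntegral_compl_closedBall_eq_integral_ray ha hint, finrank_euclideanSpace_fin,
    integral_congr_ae (hu.ae_integral_ray hr ha hint), integral_const_mul]

theorem isRayRegular_yukawa_sub (hr : 0 < r) (hD : 0 < D) (x : ℝ³) :
    IsRayRegular (fun y => yukawa r (y - x)) 0 D where
  continuousOn := by
    filter_upwards [ae_toSphere_smul_ne volume (by simp) x] with ω hω s hs
    have hne : 0 + s • (ω : ℝ³) ≠ x := by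
      rw [zero_add]
      exact hω s (hD.trans_le hs)
    exact ((hasGradientAt_yukawa_sub r hne).hasFDerivAt.comp_hasDerivAt s
      (hasDerivAt_const_add_smul 0 (ω : ℝ³) s)).continuousAt.continuousWithinAt
  countable ω := by
    refine ((setOf_add_smul_eq_subsingleton 0 x
      (ne_zero_of_mem_unit_sphere ω)).finite.subset fun s hs => ?_).countable
    by_contra hne
    exact hs (hasGradientAt_yukawa_sub r hne).differentiableAt
  isBigO_one := by
    refine IsBigO.of_bound 1 ?_
    filter_upwards [tendsto_norm_cobounded_atTop.eventually_ge_atTop (1 + ‖x‖)] with y hy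
    rw [norm_one, mul_one]
    exact (abs_yukawa_le_inv hr _).trans (inv_le_one_of_one_le₀ (by
      linarith [norm_sub_norm_le y x]))

theorem isRayRegular_of_contDiff_of_hasCompactSupport {f : ℝ³ → ℝ} (hf : ContDiff ℝ 1 f)
    (hsupp : HasCompactSupport f) (c : ℝ³) (a : ℝ) : IsRayRegular f c a where
  continuousOn := .of_forall fun _ => (hf.continuous.comp (by fun_prop)).continuousOn
  countable _ := by simp [hf.differentiable one_ne_zero _]
  isBigO_one := by
    obtain ⟨B, hB⟩ := hsupp.exists_bound_of_continuous hf.continuous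
    exact IsBigO.of_bound B (.of_forall fun y => by simpa using hB y)

theorem yukawaW_eq_yukawaProfile (r D : ℝ) (x : ℝ³) :
    yukawaW r D x = yukawaProfile r (max ‖x‖ D) := by
  rw [yukawaW]
  split_ifs with h
  · rw [max_eq_right h.le, yukawaProfile]
  · rw [max_eq_left (not_lt.1 h), yukawa, yukawaProfile]

theorem yukawaW_of_norm_le (r : ℝ) {x : ℝ³} (hx : ‖x‖ ≤ D) :
    yukawaW r D x = yukawaProfile r D := by
  rw [yukawaW_eq_yukawaProfile, max_eq_right hx]

theorem abs_yukawaW_le (hr : 0 < r) (hD : 0 < D) (x : ℝ³) : |yukawaW r D x| ≤ D⁻¹ := by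
  have hmax : 0 < max ‖x‖ D := lt_max_of_lt_right hD
  rw [yukawaW_eq_yukawaProfile, abs_of_nonneg (yukawaProfile_nonneg r hmax.le)]
  exact (yukawaProfile_le_inv hr hmax.le).trans (inv_anti₀ hD (le_max_right _ _))

theorem lipschitzWith_yukawaW (hr : 0 < r) (hD : 0 < D) :
    LipschitzWith (toNNReal (D ^ 2)⁻¹) (yukawaW r D) := by
  have hderiv : ∀ s ∈ Ici D, ‖-(yukawaFlux r s / s ^ 2)‖ ≤ (D ^ 2)⁻¹ := fun s hs => by
    have hs_nonneg : 0 ≤ s := hD.le.trans hs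
    have hflux := (yukawaFlux_pos hr hs_nonneg).le
    rw [norm_neg, norm_of_nonneg (by positivity), ← one_div]
    exact div_le_div₀ zero_le_one (yukawaFlux_le_one r s) (by positivity)
      (pow_le_pow_left₀ hD.le hs 2)
  refine LipschitzWith.of_dist_le' fun x y => ?_
  rw [dist_eq_norm, dist_eq_norm, yukawaW_eq_yukawaProfile, yukawaW_eq_yukawaProfile]
  calc ‖yukawaProfile r (max ‖x‖ D) - yukawaProfile r (max ‖y‖ D)‖
      ≤ (D ^ 2)⁻¹ * ‖max ‖x‖ D - max ‖y‖ D‖ :=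
        (convex_Ici D).norm_image_sub_le_of_norm_hasDerivWithin_le
          (fun s hs => (hasDerivAt_yukawaProfile r (hD.trans_le hs).ne').hasDerivWithinAt) hderiv
          (mem_Ici.2 (le_max_right _ _)) (mem_Ici.2 (le_max_right _ _))
    _ ≤ (D ^ 2)⁻¹ * ‖x - y‖ := by
        gcongr
        exact (abs_max_sub_max_le_abs _ _ _).trans (abs_norm_sub_norm_le x y)

theorem yukawaW_eventuallyEq_of_norm_lt (r : ℝ) {x : ℝ³} (hx : ‖x‖ < D) :
    yukawaW r D =ᶠ[𝓝 x] fun _ => yukawaProfile r D := by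
  filter_upwards [continuous_norm.continuousAt.eventually_lt_const hx] with y hy
  exact yukawaW_of_norm_le r hy.le

theorem yukawaW_eventuallyEq_of_lt_norm (r : ℝ) {x : ℝ³} (hx : D < ‖x‖) :
    yukawaW r D =ᶠ[𝓝 x] yukawa r := by
  filter_upwards [continuous_norm.continuousAt.eventually_const_lt hx] with y hy
  exact if_neg hy.not_gt

theorem differentiableAt_yukawa (r : ℝ) {x : ℝ³} (hx : x ≠ 0) :
    DifferentiableAt ℝ (yukawa r) x := by
  simpa using (hasGradientAt_yukawa_sub r hx).differentiableAt

theorem differentiableAt_yukawaW (r : ℝ) (hD : 0 ≤ D) {x : ℝ³} (hx : ‖x‖ ≠ D) :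
    DifferentiableAt ℝ (yukawaW r D) x := by
  rcases lt_or_gt_of_ne hx with h | h
  · exact (differentiableAt_const _).congr_of_eventuallyEq (yukawaW_eventuallyEq_of_norm_lt r h)
  · exact (differentiableAt_yukawa r (norm_pos_iff.1 (hD.trans_lt h))).congr_of_eventuallyEq
      (yukawaW_eventuallyEq_of_lt_norm r h)

theorem isRayRegular_yukawaW (hr : 0 < r) (hD : 0 < D) (c : ℝ³) (a : ℝ) :
    IsRayRegular (yukawaW r D) c a where
  continuousOn := .of_forall fun _ =>
    ((lipschitzWith_yukawaW hr hD).continuous.comp (by fun_prop)).continuousOn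
  countable ω := by
    refine ((finite_setOf_norm_add_smul_eq c (ne_zero_of_mem_unit_sphere ω) D).subset
      fun s hs => ?_).countable
    by_contra hne
    exact hs (differentiableAt_yukawaW r hD.le hne)
  isBigO_one := IsBigO.of_bound D⁻¹ (.of_forall fun y => by simpa using abs_yukawaW_le hr hD y)

theorem screenedDensity_yukawaW_of_norm_lt (r : ℝ) (v : ℝ³ → ℝ) {y : ℝ³} (hy : ‖y‖ < D) :
    screenedDensity r (yukawaW r D) v y = r⁻¹ ^ 2 * yukawaProfile r D * v y := by
  rw [screenedDensity, (yukawaW_eventuallyEq_of_norm_lt r hy).gradient_eq, gradient_fun_const,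
    inner_zero_left, zero_add, yukawaW_of_norm_le r hy.le, mul_assoc]

theorem screenedDensity_yukawaW_of_lt_norm (r : ℝ) (v : ℝ³ → ℝ) {y : ℝ³} (hy : D < ‖y‖) :
    screenedDensity r (yukawaW r D) v y = screenedDensity r (fun z => yukawa r (z - 0)) v y := by
  simp only [sub_zero]
  rw [screenedDensity, screenedDensity, (yukawaW_eventuallyEq_of_lt_norm r hy).gradient_eq,
    (yukawaW_eventuallyEq_of_lt_norm r hy).eq_of_nhds]

theorem volume_real_ball_fin_three (hD : 0 ≤ D) :
    (volume : Measure ℝ³).real (ball 0 D) = D ^ 3 * (π * 4 / 3) := by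
  rw [Measure.real, EuclideanSpace.volume_ball_fin_three, ENNReal.toReal_mul, ENNReal.toReal_pow,
    ENNReal.toReal_ofReal hD, ENNReal.toReal_ofReal (by positivity)]

theorem toSphere_real_univ : (volume : Measure ℝ³).toSphere.real univ = 4 * π := by
  rw [Measure.toSphere_real_apply_univ, finrank_euclideanSpace_fin,
    volume_real_ball_fin_three zero_le_one]
  push_cast
  ring

theorem deriv_yukawaProfile (r : ℝ) (hD : D ≠ 0) :
    deriv (yukawaProfile r) D = -(yukawaFlux r D / D ^ 2) :=
  (hasDerivAt_yukawaProfile r hD).deriv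

theorem yukawaSmear_surface_coeff_nonneg (hr : 0 < r) (hD : 0 < D) :
    0 ≤ -(4 * π)⁻¹ * deriv (yukawaProfile r) D := by
  have := yukawaFlux_pos hr hD.le
  rw [deriv_yukawaProfile r hD.ne', neg_mul_neg]
  positivity

theorem measurableEmbedding_smul_sphere (hD : D ≠ 0) :
    MeasurableEmbedding fun ω : sphere (0 : ℝ³) 1 => D • (ω : ℝ³) :=
  (measurableEmbedding_const_smul₀ hD).comp
    (MeasurableEmbedding.subtype_coe isClosed_sphere.measurableSet)

theorem integral_sphereSurfaceMeasure (hD : 0 < D) (v : ℝ³ → ℝ) :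
    ∫ y, v y ∂sphereSurfaceMeasure D =
      D ^ 2 * ∫ ω : sphere (0 : ℝ³) 1, v (D • (ω : ℝ³)) ∂(volume : Measure ℝ³).toSphere := by
  rw [sphereSurfaceMeasure, integral_smul_measure,
    (measurableEmbedding_smul_sphere hD.ne').integral_map,
    ENNReal.toReal_ofReal (sq_nonneg D), smul_eq_mul]

theorem yukawaSmear_eq (r D : ℝ) : yukawaSmear r D =
    ENNReal.ofReal ((4 * π)⁻¹ * r⁻¹ ^ 2 * yukawaProfile r D) • volume.restrict (ball 0 D) +
      ENNReal.ofReal (-(4 * π)⁻¹ * deriv (yukawaProfile r) D) • sphereSurfaceMeasure D := rfl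

theorem integral_yukawaSmear (hr : 0 < r) (hD : 0 < D) {v : ℝ³ → ℝ}
    (hball : IntegrableOn v (ball 0 D))
    (hsphere : Integrable (fun ω : sphere (0 : ℝ³) 1 => v (D • (ω : ℝ³)))
      (volume : Measure ℝ³).toSphere) :
    ∫ y, v y ∂yukawaSmear r D = (4 * π)⁻¹ *
      (r⁻¹ ^ 2 * yukawaProfile r D * (∫ y in ball 0 D, v y) + yukawaFlux r D *
        ∫ ω : sphere (0 : ℝ³) 1, v (D • (ω : ℝ³)) ∂(volume : Measure ℝ³).toSphere) := by
  have hsurface : Integrable v (sphereSurfaceMeasure D) :=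
    (((measurableEmbedding_smul_sphere hD.ne').integrable_map_iff).2 hsphere).smul_measure
      ENNReal.ofReal_ne_top
  have hprofile := yukawaProfile_nonneg r hD.le
  rw [yukawaSmear_eq, integral_add_measure (hball.smul_measure ENNReal.ofReal_ne_top)
    (hsurface.smul_measure ENNReal.ofReal_ne_top), integral_smul_measure, integral_smul_measure,
    integral_sphereSurfaceMeasure hD, ENNReal.toReal_ofReal (by positivity),
    ENNReal.toReal_ofReal (yukawaSmear_surface_coeff_nonneg hr hD), deriv_yukawaProfile r hD.ne']
  simp only [smul_eq_mul]
  field_simp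

theorem integral_screenedDensity_yukawa_sub (hr : 0 < r) {x : ℝ³} {K : NNReal} {B : ℝ}
    (hlip : LipschitzWith K u) (hB : ∀ y, |u y| ≤ B) (hu : IsRayRegular u x 0) :
    ∫ y, screenedDensity r (fun z => yukawa r (z - x)) u y = 4 * π * u x := by
  have hint := integrable_screenedDensity r (integrable_yukawa_sub hr x)
    (integrable_gradient_yukawa_sub hr x) hlip hB
  have hgreen := hu.setIntegral_screenedDensity_yukawa hr le_rfl hint.integrableOn
  simpa only [closedBall_zero, restrict_compl_singleton, yukawaFlux_zero, one_mul, zero_smul,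
    add_zero, integral_const, toSphere_real_univ, smul_eq_mul] using hgreen

theorem integral_screenedDensity_yukawaW (hr : 0 < r) (hD : 0 < D) {v : ℝ³ → ℝ}
    (hv : Integrable v) (hv' : Integrable (∇ v)) (hray : IsRayRegular v 0 D) :
    ∫ y, screenedDensity r (yukawaW r D) v y = 4 * π * ∫ y, v y ∂yukawaSmear r D := by
  have hint : Integrable (screenedDensity r (yukawaW r D) v) := by
    rw [screenedDensity_comm]
    exact integrable_screenedDensity r hv hv' (lipschitzWith_yukawaW hr hD) (abs_yukawaW_le hr hD)
  have hball : ∫ y in closedBall 0 D, screenedDensity r (yukawaW r D) v y =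
      r⁻¹ ^ 2 * yukawaProfile r D * ∫ y in ball 0 D, v y := by
    have hae : closedBall (0 : ℝ³) D =ᵐ[volume] ball 0 D := by
      rw [← ball_union_sphere]
      exact union_ae_eq_left_of_ae_eq_empty (ae_eq_empty.2 (Measure.addHaar_sphere _ _ _))
    rw [setIntegral_congr_set hae, setIntegral_congr_fun measurableSet_ball fun y hy =>
      screenedDensity_yukawaW_of_norm_lt r v (mem_ball_zero_iff.1 hy), integral_const_mul]
  have hcompl : EqOn (screenedDensity r (yukawaW r D) v)
      (screenedDensity r (fun y => yukawa r (y - 0)) v) (closedBall 0 D)ᶜ := fun y hy =>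
    screenedDensity_yukawaW_of_lt_norm r v (by simpa using hy)
  have hint_compl := hint.integrableOn.congr_fun hcompl measurableSet_closedBall.compl
  have hsphere := hray.integrable_sphere hr hD.le hint_compl
  have hgreen := hray.setIntegral_screenedDensity_yukawa hr hD.le hint_compl
  simp only [zero_add] at hsphere hgreen
  rw [← integral_add_compl measurableSet_closedBall hint, hball,
    setIntegral_congr_fun measurableSet_closedBall.compl hcompl, hgreen,
    integral_yukawaSmear hr hD hv.integrableOn hsphere, mul_inv_cancel_left₀ (by positivity)]

theorem integral_yukawa_yukawaSmear (hr : 0 < r) (hD : 0 < D) (x : ℝ³) :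
    ∫ y, yukawa r (x - y) ∂yukawaSmear r D = yukawaW r D x := by
  have hsymm (y : ℝ³) : yukawa r (x - y) = yukawa r (y - x) := by
    simp only [yukawa, norm_sub_rev]
  simp only [hsymm]
  have hsmear := integral_screenedDensity_yukawaW hr hD (integrable_yukawa_sub hr x)
    (integrable_gradient_yukawa_sub hr x) (isRayRegular_yukawa_sub hr hD x)
  rw [screenedDensity_comm, integral_screenedDensity_yukawa_sub hr (lipschitzWith_yukawaW hr hD)
    (abs_yukawaW_le hr hD) (isRayRegular_yukawaW hr hD x 0)] at hsmear
  exact (mul_left_cancel₀ (by positivity) hsmear).symm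

theorem integral_yukawaW_yukawaSmear (hr : 0 < r) (hD : 0 < D) :
    ∫ x, yukawaW r D x ∂yukawaSmear r D =
      (1 / 3) * (D * r⁻¹ ^ 2 + 3 * D⁻¹ + 3 * r⁻¹) * exp (-2 * D / r) := by
  have hball : EqOn (yukawaW r D) (fun _ => yukawaProfile r D) (ball 0 D) := fun x hx =>
    yukawaW_of_norm_le r (mem_ball_zero_iff.1 hx).le
  have hsphere (ω : sphere (0 : ℝ³) 1) : yukawaW r D (D • (ω : ℝ³)) = yukawaProfile r D :=
    yukawaW_of_norm_le r (norm_smul_of_mem_unitSphere ω hD.le).le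
  have hexp : exp (-2 * D / r) = exp (-D / r) ^ 2 := by
    rw [← exp_nat_mul]
    ring_nf
  rw [integral_yukawaSmear hr hD ((integrableOn_const measure_ball_lt_top.ne).congr_fun hball.symm
    measurableSet_ball) (by simp only [hsphere, integrable_const]),
    setIntegral_congr_fun measurableSet_ball hball]
  simp only [hsphere, integral_const, measureReal_restrict_apply_univ, toSphere_real_univ,
    volume_real_ball_fin_three hD.le, smul_eq_mul, yukawaProfile, yukawaFlux, hexp]
  field_simp
  ring

theorem integral_yukawaW_mul_eq (hr : 0 < r) (hD : 0 < D) {f : ℝ³ → ℝ} (hf : ContDiff ℝ 2 f)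
    (hsupp : HasCompactSupport f) :
    ∫ x, yukawaW r D x * (-(lap f x) + r⁻¹ ^ 2 * f x) =
      ∫ x, screenedDensity r (yukawaW r D) f x := by
  have hlip := lipschitzWith_yukawaW hr hD
  have hgreen : ∫ x, inner ℝ (∇ (yukawaW r D) x) (∇ f x) = -∫ x, yukawaW r D x * lap f x := by
    simpa only [lap, EuclideanSpace.basisFun_apply] using
      integral_inner_gradient_eq_neg (EuclideanSpace.basisFun (Fin 3) ℝ) hlip hf hsupp
  have hinner : Integrable fun x => inner ℝ (∇ (yukawaW r D) x) (∇ f x) := by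
    simp only [real_inner_comm]
    exact integrable_inner_gradient
      (integrable_gradient_of_contDiff (hf.of_le one_le_two) hsupp) hlip
  have hlap : Integrable fun x => yukawaW r D x * lap f x := by
    simp only [lap, Finset.mul_sum]
    exact integrable_finsetSum _ fun i _ =>
      integrable_mul_fderiv_fderiv_apply hlip.continuous hf hsupp _ _
  have hmass : Integrable fun x => r⁻¹ ^ 2 * (yukawaW r D x * f x) :=
    ((hlip.continuous.mul hf.continuous).integrable_of_hasCompactSupport
      hsupp.mul_left).const_mul _
  simp only [screenedDensity]
  rw [integral_add hinner hmass, hgreen, neg_add_eq_sub, ← integral_sub hmass hlap]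
  refine integral_congr_ae (.of_forall fun x => ?_)
  ring

end Yukawa

theorem yukawa_smear_properties (r D : ℝ) (hr : 0 < r) (hD : 0 < D) :
    -- `μ_D = (4π)⁻¹(−Δ + r⁻²)W_D` in the distributional sense
    (∀ f : EuclideanSpace ℝ (Fin 3) → ℝ, ContDiff ℝ (⊤ : ℕ∞) f → HasCompactSupport f →
        (4 * π)⁻¹ * ∫ x, yukawaW r D x * (-(lap f x) + r⁻¹ ^ 2 * f x)
          = ∫ x, f x ∂(yukawaSmear r D)) ∧
    -- nonnegativity of the singular coefficient `−(4π)⁻¹ Y′(D)`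
    (0 ≤ -(4 * π)⁻¹ * deriv (fun s : ℝ => Real.exp (-s / r) / s) D) ∧
    -- the self-energy of the smearing measure
    (∫ x, (∫ y, yukawa r (x - y) ∂(yukawaSmear r D)) ∂(yukawaSmear r D)
      = (1 / 3) * (D * r⁻¹ ^ 2 + 3 * D⁻¹ + 3 * r⁻¹) * Real.exp (-2 * D / r)) := by
  refine ⟨fun f hsmooth hsupp => ?_, yukawaSmear_surface_coeff_nonneg hr hD, ?_⟩
  · have hf : ContDiff ℝ 2 f := contDiff_infty.1 hsmooth 2
    have hf₁ : ContDiff ℝ 1 f := hf.of_le one_le_two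
    rw [integral_yukawaW_mul_eq hr hD hf hsupp, integral_screenedDensity_yukawaW hr hD
      (hf.continuous.integrable_of_hasCompactSupport hsupp)
      (integrable_gradient_of_contDiff hf₁ hsupp)
      (isRayRegular_of_contDiff_of_hasCompactSupport hf₁ hsupp 0 D),
      inv_mul_cancel_left₀ (by positivity)]
  · simp only [integral_yukawa_yukawaSmear hr hD]
    exact integral_yukawaW_yukawaSmear hr hD

end
end

section
/- Let f_s(p) = |p|²/(|p|² + s⁻²) on ℝ³ for s > 0, and let |X̂|² be as for the unit cube. Then ‖f_s − (2π)⁻³ f_s * |X̂|²‖_∞ ≤ C s^{1/2} for a universal constant C > 0. -/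
open MeasureTheory Real

/-!
The multiplier `p ↦ ‖p‖² / (‖p‖² + s⁻²)` takes values in `[0, 1]` and is `s`-Lipschitz.
Interpolating between these two facts, it is `α`-Hölder with constant `s ^ α` for `0 < α ≤ 1`.

By Plancherel, applied to the indicator of the unit interval in each coordinate, `|X̂|²` has total
mass `(2π)ᵈ`, so the convolution averages the multiplier against a probability density, and the
error is at most `s ^ α` times the moment of order `α` of `(2π)⁻ᵈ |X̂|²`. As `|X̂|²` decays like
`q_j⁻²` in each coordinate, this moment is finite for `α < 1`. The choice `α = 1 / 2` replaces the
optimisation over a cut-off radius `r = s ^ (-1 / 2)`.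
-/

open scoped FourierTransform SchwartzMap NNReal

section Plancherel

theorem integral_norm_sq_coeFn {X F : Type*} [MeasurableSpace X] {μ : Measure X}
    [NormedAddCommGroup F] [InnerProductSpace ℂ F] (f : Lp F 2 μ) :
    ∫ x, ‖f x‖ ^ 2 ∂μ = ‖f‖ ^ 2 := by
  have h : (‖f‖ : ℂ) ^ 2 = ∫ x, (‖f x‖ : ℂ) ^ 2 ∂μ := by
    simpa using! L2.inner_def (𝕜 := ℂ) f f
  norm_cast at h
  exact (h.trans integral_ofReal).symm

variable {E F : Type*} [NormedAddCommGroup E] [InnerProductSpace ℝ E] [FiniteDimensional ℝ E]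
  [MeasurableSpace E] [BorelSpace E] [NormedAddCommGroup F] [InnerProductSpace ℂ F]
  [CompleteSpace F]

theorem fourier_toLp_ae_eq {f : E → F} (hf₁ : Integrable f) (hf₂ : MemLp f 2) :
    (𝓕 hf₂.toLp : Lp F 2 (volume : Measure E)) =ᵐ[volume] 𝓕 f := by
  have hcont : Continuous (𝓕 f) :=
    VectorFourier.fourierIntegral_continuous continuous_fourierChar continuous_inner hf₁
  refine ae_eq_of_integral_contDiff_smul_eq ((Lp.memLp _).locallyIntegrable one_le_two)
    hcont.locallyIntegrable fun g hg hg_supp ↦ ?_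
  let φ : 𝓢(E, ℂ) := HasCompactSupport.toSchwartzMap (f := Complex.ofRealCLM ∘ g)
    (hg_supp.comp_left rfl) (by fun_prop)
  have hselfAdjoint : ∫ ξ, 𝓕 φ ξ • f ξ = ∫ x, φ x • 𝓕 f x := by
    simpa using! VectorFourier.integral_fourierIntegral_smul_eq_flip (L := innerₗ E)
      continuous_fourierChar continuous_inner φ.integrable hf₁
  calc ∫ x, g x • (𝓕 hf₂.toLp : Lp F 2 (volume : Measure E)) x
    _ = ((𝓕 hf₂.toLp : Lp F 2 (volume : Measure E)) : 𝓢'(E, F)) φ := by simp [φ]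
    _ = (hf₂.toLp : 𝓢'(E, F)) (𝓕 φ) := by
      rw [← Lp.fourier_toTemperedDistribution_eq, TemperedDistribution.fourier_apply]
    _ = ∫ ξ, 𝓕 φ ξ • f ξ := by
      rw [Lp.toTemperedDistribution_apply]
      refine integral_congr_ae ?_
      filter_upwards [hf₂.coeFn_toLp] with ξ hξ
      rw [hξ]
    _ = ∫ x, g x • 𝓕 f x := by rw [hselfAdjoint]; simp [φ]

theorem integral_norm_sq_fourier {f : E → F} (hf₁ : Integrable f) (hf₂ : MemLp f 2) :
    ∫ ξ, ‖𝓕 f ξ‖ ^ 2 = ∫ x, ‖f x‖ ^ 2 :=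
  calc ∫ ξ, ‖𝓕 f ξ‖ ^ 2
    _ = ∫ ξ, ‖(𝓕 hf₂.toLp : Lp F 2 (volume : Measure E)) ξ‖ ^ 2 :=
      integral_congr_ae ((fourier_toLp_ae_eq hf₁ hf₂).fun_comp (‖·‖ ^ 2)).symm
    _ = ∫ x, ‖(hf₂.toLp : Lp F 2 (volume : Measure E)) x‖ ^ 2 := by
      rw [integral_norm_sq_coeFn, integral_norm_sq_coeFn, Lp.norm_fourier_eq]
    _ = ∫ x, ‖f x‖ ^ 2 := integral_congr_ae (hf₂.coeFn_toLp.fun_comp (‖·‖ ^ 2))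

end Plancherel

section Sinc

theorem fourier_indicator_Ioc_neg {r : ℝ} (hr : 0 ≤ r) (ξ : ℝ) :
    𝓕 ((Set.Ioc (-r) r).indicator (1 : ℝ → ℂ)) ξ = 2 * r * sinc (2 * π * r * ξ) := by
  have hinterval : 𝓕 ((Set.Ioc (-r) r).indicator (1 : ℝ → ℂ)) ξ =
      ∫ x in -r..r, Complex.exp ((-2 * π * ξ * x : ℝ) * Complex.I) := by
    rw [Real.fourier_real_eq_integral_exp_smul, intervalIntegral.integral_of_le (by linarith),
      ← integral_indicator measurableSet_Ioc]
    congr with x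
    by_cases hx : x ∈ Set.Ioc (-r) r <;> simp [hx, mul_right_comm]
  rcases eq_or_ne ξ 0 with rfl | hξ
  · simp [hinterval, two_mul]
  · have hc : -2 * π * ξ ≠ 0 := by simp [pi_ne_zero, hξ]
    have hneg : -2 * π * ξ * r = -(2 * π * r * ξ) := by ring
    have hπ : (π : ℂ) ≠ 0 := by exact_mod_cast pi_ne_zero
    have hξ' : (ξ : ℂ) ≠ 0 := by exact_mod_cast hξ
    rw [hinterval, intervalIntegral.integral_comp_mul_left
      (fun t : ℝ ↦ Complex.exp (t * Complex.I)) hc, mul_neg, integral_exp_mul_I_eq_sinc, hneg,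
      sinc_neg, Complex.real_smul]
    push_cast
    field

theorem integral_sinc_sq : ∫ t, sinc t ^ 2 = π := by
  let r : ℝ := (2 * π)⁻¹
  let f : ℝ → ℂ := (Set.Ioc (-r) r).indicator 1
  have hr : 0 < r := by positivity
  have hfourier (t : ℝ) : ‖𝓕 f t‖ ^ 2 = π⁻¹ ^ 2 * sinc t ^ 2 := by
    have : 𝓕 f t = (π⁻¹ * sinc t : ℝ) := by
      rw [fourier_indicator_Ioc_neg hr.le, mul_inv_cancel₀ two_pi_pos.ne', one_mul]
      simp only [r]
      push_cast
      ring
    rw [this, Complex.norm_real, norm_eq_abs, sq_abs, mul_pow]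
  have hnorm : ∫ x, ‖f x‖ ^ 2 = π⁻¹ := by
    have (x : ℝ) : ‖f x‖ ^ 2 = (Set.Ioc (-r) r).indicator 1 x := by
      by_cases hx : x ∈ Set.Ioc (-r) r <;> simp [f, hx]
    simp_rw [this]
    rw [integral_indicator_one measurableSet_Ioc, volume_real_Ioc_of_le (by linarith)]
    simp only [r]
    ring
  have hplancherel : ∫ ξ, ‖𝓕 f ξ‖ ^ 2 = ∫ x, ‖f x‖ ^ 2 :=
    integral_norm_sq_fourier
      ((integrable_indicator_iff measurableSet_Ioc).2 (integrableOn_const (by simp)))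
      (memLp_indicator_const 2 measurableSet_Ioc 1 (by simp))
  simp_rw [hfourier, hnorm, integral_const_mul] at hplancherel
  field_simp at hplancherel
  exact hplancherel

end Sinc

section UnitInterval

/-- The Fourier transform `∫ exp (-i t x) dx` of the unit interval `[-1 / 2, 1 / 2]`. At `t = 0`
division by zero makes it `0` instead of `1`, which is invisible to integrals. -/
noncomputable def unitIntervalFourier (t : ℝ) : ℝ := 2 * sin (t / 2) / t

theorem measurable_unitIntervalFourier : Measurable unitIntervalFourier := by
  unfold unitIntervalFourier
  fun_prop

theorem unitIntervalFourier_eq_sinc {t : ℝ} (ht : t ≠ 0) :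
    unitIntervalFourier t = sinc (t / 2) := by
  rw [unitIntervalFourier, sinc_of_ne_zero (by positivity)]
  field

theorem integral_unitIntervalFourier_sq : ∫ t, unitIntervalFourier t ^ 2 = 2 * π := by
  have hae : (fun t ↦ unitIntervalFourier t ^ 2) =ᵐ[volume] fun t ↦ sinc (t / 2) ^ 2 := by
    filter_upwards [Measure.ae_ne volume (0 : ℝ)] with t ht
    rw [unitIntervalFourier_eq_sinc ht]
  rw [integral_congr_ae hae, Measure.integral_comp_div (fun t ↦ sinc t ^ 2), integral_sinc_sq,
    abs_two, smul_eq_mul]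

theorem one_add_abs_mul_abs_unitIntervalFourier_le (t : ℝ) :
    (1 + |t|) * |unitIntervalFourier t| ≤ 3 := by
  rcases eq_or_ne t 0 with rfl | ht
  · simp [unitIntervalFourier]
  · have hle_one : |unitIntervalFourier t| ≤ 1 :=
      unitIntervalFourier_eq_sinc ht ▸ abs_sinc_le_one (t / 2)
    have hmul : |t| * |unitIntervalFourier t| = 2 * |sin (t / 2)| := by
      rw [← abs_mul, unitIntervalFourier, mul_div_cancel₀ _ ht, abs_mul, abs_two]
    linarith [abs_sin_le_one (t / 2)]

theorem integrable_one_add_abs_rpow_mul_unitIntervalFourier_sq {α : ℝ} (hα : α < 1) :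
    Integrable fun t ↦ (1 + |t|) ^ α * unitIntervalFourier t ^ 2 := by
  have hdecay : Integrable fun t : ℝ ↦ 9 * (1 + |t|) ^ (-(2 - α)) :=
    (integrable_one_add_norm (by simp; linarith)).const_mul 9
  have hmeas := measurable_unitIntervalFourier
  refine hdecay.mono' (by fun_prop) (.of_forall fun t ↦ ?_)
  have hpos : 0 < 1 + |t| := by positivity
  rw [norm_of_nonneg (by positivity)]
  calc (1 + |t|) ^ α * unitIntervalFourier t ^ 2
    _ = ((1 + |t|) * |unitIntervalFourier t|) ^ 2 * (1 + |t|) ^ (-(2 - α)) := by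
      rw [neg_sub, rpow_sub hpos, rpow_two, mul_pow, sq_abs]
      field
    _ ≤ 3 ^ 2 * (1 + |t|) ^ (-(2 - α)) := by
      gcongr
      exact one_add_abs_mul_abs_unitIntervalFourier_le t
    _ = 9 * (1 + |t|) ^ (-(2 - α)) := by norm_num

end UnitInterval

theorem one_add_sum_le_prod_one_add {ι R : Type*} [CommSemiring R] [PartialOrder R]
    [IsOrderedRing R] (s : Finset ι) {f : ι → R} (hf : ∀ i ∈ s, 0 ≤ f i) :
    1 + ∑ i ∈ s, f i ≤ ∏ i ∈ s, (1 + f i) := by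
  classical
  induction s using Finset.induction_on with
  | empty => simp
  | insert i s hi ih =>
    rw [Finset.forall_mem_insert] at hf
    rw [Finset.sum_insert hi, Finset.prod_insert hi]
    have hsum : 0 ≤ ∑ j ∈ s, f j := Finset.sum_nonneg hf.2
    calc 1 + (f i + ∑ j ∈ s, f j)
      _ ≤ 1 + (f i + ∑ j ∈ s, f j) + f i * ∑ j ∈ s, f j :=
        le_add_of_nonneg_right (mul_nonneg hf.1 hsum)
      _ = (1 + f i) * (1 + ∑ j ∈ s, f j) := by ring
      _ ≤ (1 + f i) * ∏ j ∈ s, (1 + f j) :=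
        mul_le_mul_of_nonneg_left (ih hf.2) (add_nonneg zero_le_one hf.1)

section EuclideanSpace

variable {ι 𝕜 : Type*} [Fintype ι] [RCLike 𝕜]

theorem norm_le_prod_one_add_abs (q : EuclideanSpace ℝ ι) : ‖q‖ ≤ ∏ j, (1 + |q j|) := by
  refine (sq_le_sq₀ (norm_nonneg q) (by positivity)).1 ?_
  calc ‖q‖ ^ 2
    _ ≤ 1 + ∑ j, q j ^ 2 := by rw [EuclideanSpace.real_norm_sq_eq]; linarith
    _ ≤ ∏ j, (1 + q j ^ 2) := one_add_sum_le_prod_one_add _ fun j _ ↦ sq_nonneg _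
    _ ≤ ∏ j, (1 + |q j|) ^ 2 := by
      gcongr with j
      nlinarith [abs_nonneg (q j), sq_abs (q j)]
    _ = (∏ j, (1 + |q j|)) ^ 2 := by rw [Finset.prod_pow]

theorem integrable_prod_euclideanSpace {f : ι → ℝ → 𝕜} (hf : ∀ j, Integrable (f j)) :
    Integrable fun q : EuclideanSpace ℝ ι ↦ ∏ j, f j (q j) :=
  (PiLp.volume_preserving_ofLp ι).integrable_comp_of_integrable (Integrable.fintype_prod hf)

theorem integral_prod_euclideanSpace (f : ι → ℝ → 𝕜) :
    ∫ q : EuclideanSpace ℝ ι, ∏ j, f j (q j) = ∏ j, ∫ t, f j t := by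
  rw [← integral_fintype_prod_volume_eq_prod]
  exact (PiLp.volume_preserving_ofLp ι).integral_comp
    (MeasurableEquiv.toLp 2 (ι → ℝ)).symm.measurableEmbedding (fun x ↦ ∏ j, f j (x j))

end EuclideanSpace

section UnitCube

variable {ι : Type*} [Fintype ι]

/-- The squared modulus `|X̂|²` of the Fourier transform of the unit cube, as a product over the
coordinates. It inherits from `unitIntervalFourier` the value `0` on the coordinate hyperplanes. -/
noncomputable def unitCubeFourierSq (q : EuclideanSpace ℝ ι) : ℝ :=
  ∏ j, unitIntervalFourier (q j) ^ 2

theorem unitCubeFourierSq_nonneg (q : EuclideanSpace ℝ ι) : 0 ≤ unitCubeFourierSq q :=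
  Finset.prod_nonneg fun _ _ ↦ sq_nonneg _

theorem measurable_unitCubeFourierSq :
    Measurable (unitCubeFourierSq : EuclideanSpace ℝ ι → ℝ) := by
  have := measurable_unitIntervalFourier
  unfold unitCubeFourierSq
  fun_prop

theorem integral_unitCubeFourierSq :
    ∫ q : EuclideanSpace ℝ ι, unitCubeFourierSq q = (2 * π) ^ Fintype.card ι :=
  (integral_prod_euclideanSpace fun _ t ↦ unitIntervalFourier t ^ 2).trans
    (by simp [integral_unitIntervalFourier_sq])

theorem integrable_norm_rpow_mul_unitCubeFourierSq {α : ℝ} (hα₀ : 0 ≤ α) (hα₁ : α < 1) :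
    Integrable fun q : EuclideanSpace ℝ ι ↦ ‖q‖ ^ α * unitCubeFourierSq q := by
  have hmeas := measurable_unitCubeFourierSq (ι := ι)
  refine (integrable_prod_euclideanSpace fun _ : ι ↦
    integrable_one_add_abs_rpow_mul_unitIntervalFourier_sq hα₁).mono' (by fun_prop)
    (.of_forall fun q ↦ ?_)
  have hnonneg := unitCubeFourierSq_nonneg q
  calc ‖‖q‖ ^ α * unitCubeFourierSq q‖
    _ = ‖q‖ ^ α * unitCubeFourierSq q := norm_of_nonneg (by positivity)
    _ ≤ (∏ j, (1 + |q j|)) ^ α * unitCubeFourierSq q := by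
      gcongr
      exact norm_le_prod_one_add_abs q
    _ = ∏ j, (1 + |q j|) ^ α * unitIntervalFourier (q j) ^ 2 := by
      rw [Finset.prod_mul_distrib, finsetProd_rpow _ _ fun j _ ↦ by positivity, unitCubeFourierSq]

theorem integrable_unitCubeFourierSq :
    Integrable (unitCubeFourierSq : EuclideanSpace ℝ ι → ℝ) := by
  simpa using integrable_norm_rpow_mul_unitCubeFourierSq (ι := ι) le_rfl zero_lt_one

end UnitCube

section Holder

theorem holderWith_of_lipschitzWith_of_edist_le {X Y : Type*} [PseudoEMetricSpace X]
    [PseudoEMetricSpace Y] {f : X → Y} {K D α : ℝ≥0} (hf : LipschitzWith K f)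
    (hD : ∀ x y, edist (f x) (f y) ≤ D) (hα : α ≤ 1) :
    HolderWith (D ^ (1 - α : ℝ) * K ^ (α : ℝ)) α f := by
  have hD' : HolderWith D 0 f := fun x y ↦ by simpa using hD x y
  simpa [hα] using hD'.interpolate (holderWith_one.2 hf) (tsub_add_cancel_of_le hα)

theorem abs_mul_integral_sub_integral_comp_sub_mul_le {E : Type*} [SeminormedAddCommGroup E]
    [MeasurableSpace E] [OpensMeasurableSpace E] [MeasurableSub E] {μ : Measure E} {f k : E → ℝ}
    {C α : ℝ≥0} (hf : HolderWith C α f) (hα : 0 < α) (hk : Integrable k μ)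
    (hkα : Integrable (fun q ↦ ‖q‖ ^ (α : ℝ) * k q) μ) (p : E) :
    |f p * ∫ q, k q ∂μ - ∫ q, f (p - q) * k q ∂μ| ≤ C * ∫ q, ‖q‖ ^ (α : ℝ) * |k q| ∂μ := by
  have hbound : ∀ q, ‖(f p - f (p - q)) * k q‖ ≤ C * (‖q‖ ^ (α : ℝ) * |k q|) := fun q ↦ by
    have := hf.dist_le p (p - q)
    rw [Real.dist_eq, dist_self_sub_right] at this
    rw [norm_mul, norm_eq_abs, norm_eq_abs, ← mul_assoc]
    gcongr
  have hint : Integrable (fun q ↦ C * (‖q‖ ^ (α : ℝ) * |k q|)) μ := by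
    refine (hkα.norm.congr (.of_forall fun q ↦ ?_)).const_mul _
    simp [abs_of_nonneg (rpow_nonneg _ _)]
  have hmeas : Measurable fun q ↦ f (p - q) :=
    (hf.continuous hα).measurable.comp (measurable_const_sub p)
  have hdiff : Integrable (fun q ↦ (f p - f (p - q)) * k q) μ :=
    hint.mono' ((hmeas.const_sub _).aestronglyMeasurable.mul hk.aestronglyMeasurable)
      (.of_forall hbound)
  calc |f p * ∫ q, k q ∂μ - ∫ q, f (p - q) * k q ∂μ|
    _ = |∫ q, (f p - f (p - q)) * k q ∂μ| := by
      have hsplit : ∀ q, f (p - q) * k q = f p * k q - (f p - f (p - q)) * k q :=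
        fun q ↦ by ring
      simp_rw [hsplit]
      rw [integral_sub (hk.const_mul _) hdiff, integral_const_mul, sub_sub_cancel]
    _ ≤ ∫ q, C * (‖q‖ ^ (α : ℝ) * |k q|) ∂μ := norm_integral_le_of_norm_le hint (.of_forall hbound)
    _ = C * ∫ q, ‖q‖ ^ (α : ℝ) * |k q| ∂μ := integral_const_mul ..

end Holder

section HighPass

/-- The radial profile of the multiplier `f_s`, that is, `f_s p = highPass (s * ‖p‖)`. -/
noncomputable def highPass (x : ℝ) : ℝ := x ^ 2 / (x ^ 2 + 1)

theorem highPass_mul {s : ℝ} (hs : s ≠ 0) (x : ℝ) :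
    highPass (s * x) = x ^ 2 / (x ^ 2 + s⁻¹ ^ 2) := by
  unfold highPass
  field

theorem highPass_mem_Icc (x : ℝ) : highPass x ∈ Set.Icc 0 1 :=
  ⟨by unfold highPass; positivity, div_le_one_of_le₀ (by linarith) (by positivity)⟩

theorem lipschitzWith_highPass : LipschitzWith 1 highPass := by
  refine LipschitzWith.of_dist_le_mul fun x y ↦ ?_
  have hx : 0 < x ^ 2 + 1 := by positivity
  have hy : 0 < y ^ 2 + 1 := by positivity
  have hsub : highPass x - highPass y = (x + y) / ((x ^ 2 + 1) * (y ^ 2 + 1)) * (x - y) := by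
    unfold highPass
    field
  have hadd : |x + y| ≤ (x ^ 2 + 1) * (y ^ 2 + 1) := by
    rw [abs_le]
    constructor <;> nlinarith [sq_nonneg (x + 1), sq_nonneg (x - 1), sq_nonneg (y + 1),
      sq_nonneg (y - 1), sq_nonneg (x * y)]
  rw [dist_eq, hsub, abs_mul, abs_div, abs_of_pos (mul_pos hx hy)]
  exact mul_le_mul_of_nonneg_right ((div_le_one (by positivity)).2 hadd) (abs_nonneg _)

theorem holderWith_highPass_mul_norm {E : Type*} [SeminormedAddCommGroup E] (s : ℝ≥0) {α : ℝ≥0}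
    (hα : α ≤ 1) : HolderWith (s ^ (α : ℝ)) α fun p : E ↦ highPass (s * ‖p‖) := by
  have hlip : LipschitzWith s fun p : E ↦ highPass (s * ‖p‖) := by
    simpa using! lipschitzWith_highPass.comp
      ((lipschitzWith_smul (s : ℝ)).comp (lipschitzWith_one_norm (E := E)))
  have hosc (p q : E) : edist (highPass (s * ‖p‖)) (highPass (s * ‖q‖)) ≤ (1 : ℝ≥0) := by
    rw [edist_le_coe, ← NNReal.coe_le_coe, coe_nndist]
    exact dist_le_of_mem_Icc_01 (highPass_mem_Icc _) (highPass_mem_Icc _)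
  simpa using holderWith_of_lipschitzWith_of_edist_le hlip hosc hα

end HighPass

theorem convolution_with_cube_fourier_sq_close_general {ι : Type*} [Fintype ι] {α : ℝ}
    (hα₀ : 0 < α) (hα₁ : α < 1) :
    ∃ C > (0 : ℝ), ∀ s > (0 : ℝ), ∀ p : EuclideanSpace ℝ ι,
      |‖p‖ ^ 2 / (‖p‖ ^ 2 + s⁻¹ ^ 2)
          - (2 * π)⁻¹ ^ Fintype.card ι * ∫ q : EuclideanSpace ℝ ι,
              (‖p - q‖ ^ 2 / (‖p - q‖ ^ 2 + s⁻¹ ^ 2)) *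
                ∏ j, (2 * sin (q j / 2) / q j) ^ 2|
        ≤ C * s ^ α := by
  lift α to ℝ≥0 using hα₀.le
  let moment : ℝ := ∫ q : EuclideanSpace ℝ ι, ‖q‖ ^ (α : ℝ) * |unitCubeFourierSq q|
  have hmoment : 0 ≤ moment := by positivity
  let c : ℝ := (2 * π)⁻¹ ^ Fintype.card ι
  have hc : 0 < c := by positivity
  refine ⟨c * moment + 1, add_pos_of_nonneg_of_pos (mul_nonneg hc.le hmoment) one_pos,
    fun s hs p ↦ ?_⟩
  lift s to ℝ≥0 using hs.le
  simp_rw [← highPass_mul hs.ne']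
  have hmass : c * ∫ q : EuclideanSpace ℝ ι, unitCubeFourierSq q = 1 := by
    rw [integral_unitCubeFourierSq, ← mul_pow, inv_mul_cancel₀ two_pi_pos.ne', one_pow]
  have herror := abs_mul_integral_sub_integral_comp_sub_mul_le
    (holderWith_highPass_mul_norm s (by exact_mod_cast hα₁.le)) (by exact_mod_cast hα₀)
    integrable_unitCubeFourierSq
    (integrable_norm_rpow_mul_unitCubeFourierSq (ι := ι) hα₀.le hα₁) p
  calc |highPass (s * ‖p‖) - c * ∫ q, highPass (s * ‖p - q‖) * unitCubeFourierSq q|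
    _ = c * |highPass (s * ‖p‖) * (∫ q : EuclideanSpace ℝ ι, unitCubeFourierSq q)
          - ∫ q, highPass (s * ‖p - q‖) * unitCubeFourierSq q| := by
      rw [← abs_of_pos hc, ← abs_mul, abs_of_pos hc, mul_sub, mul_left_comm, hmass, mul_one]
    _ ≤ c * (s ^ (α : ℝ) * moment) := by gcongr; exact herror
    _ ≤ (c * moment + 1) * s ^ (α : ℝ) := by
      linarith [rpow_nonneg hs.le (α : ℝ)]

theorem convolution_with_cube_fourier_sq_close :
    ∃ C > (0 : ℝ), ∀ s > (0 : ℝ), ∀ p : EuclideanSpace ℝ (Fin 3),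
      |‖p‖ ^ 2 / (‖p‖ ^ 2 + s⁻¹ ^ 2)
          - (2 * π)⁻¹ ^ 3 * ∫ q : EuclideanSpace ℝ (Fin 3),
              (‖p - q‖ ^ 2 / (‖p - q‖ ^ 2 + s⁻¹ ^ 2)) *
                ∏ j, (2 * Real.sin (q j / 2) / q j) ^ 2|
        ≤ C * Real.sqrt s := by
  simpa only [sqrt_eq_rpow, Fintype.card_fin] using
    convolution_with_cube_fourier_sq_close_general (ι := Fin 3) one_half_pos one_half_lt_one
end
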